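/- arXiv:math/0010157 — 3 statements merged into one kernel-verified Lean document; each statement's English description precedes it below -/
import Mathlib

section
/- Fix an integer n ≥ 1 and an integer k with 0 ≤ k ≤ n. Then the function ξ_k : (0,∞) → ℂ is infinitely differentiable and satisfies the (n+1)-st order linear ordinary differential equation D^{n+1} ξ_k (h) = h^{−(n+1)}·ξ_k(h) for all h > 0, where D is the operator (Dφ)(h) := −(h/(n+1))·φ'(h). -/
open Complex

/-- The generating series `F_n(α,h) = h^{-(n+1)α} Σ_d h^{-(n+1)d} Γ(α+d+1)^{-(n+1)}`
of hypergeometric type. -/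
noncomputable def mirrorF (n : ℕ) (α : ℂ) (h : ℝ) : ℂ :=
  Complex.exp (-((n : ℂ) + 1) * α * (Real.log h : ℂ)) *
    ∑' d : ℕ, ((h : ℂ) ^ ((n + 1) * d))⁻¹ * ((Complex.Gamma (α + d + 1))⁻¹) ^ (n + 1)

/-- The differential operator `(Dφ)(h) = -(h/(n+1))·φ'(h)`. -/
noncomputable def mirrorD (n : ℕ) (φ : ℝ → ℂ) : ℝ → ℂ :=
  fun h => -((h : ℂ) / ((n : ℂ) + 1)) * deriv φ h

/-- `ξ_k(h)`, the `k`-th Taylor coefficient at `α = 0` of `α ↦ F_n(α,h)`. -/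
noncomputable def mirrorXi (n k : ℕ) (h : ℝ) : ℂ :=
  (1 / (k.factorial : ℂ)) * iteratedDeriv k (fun α : ℂ => mirrorF n α h) 0

/-!
Put `s = log h`, so that `D` becomes `-(n+1)⁻¹ ∂/∂s` and `F_n(α, h)` becomes
`F(s, α) = ∑_d exp(-(n+1)(α+d)s) Γ(α+d+1)^{-(n+1)}`. Applying `D` to the `d`-th term multiplies it
by `α+d`, and `(α+d) / Γ(α+d+1) = 1 / Γ(α+d)` turns `n+1` applications into a shift of the index:
`D^{n+1} F = exp(-(n+1)s) F + α^{n+1} exp(-(n+1)αs) / Γ(α+1)^{n+1}`.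
The last summand vanishes to order `n+1` at `α = 0`, hence does not contribute to the Taylor
coefficients of order `k ≤ n`; and by Cauchy's formula taking Taylor coefficients in `α` commutes
with `∂/∂s`. Allowing complex `s` gives smoothness for free.
-/

open Metric Set Topology

section ParametricDerivatives

variable {𝕜 E : Type*} [RCLike 𝕜] [NormedAddCommGroup E]

theorem hasDerivAt_intervalIntegral_of_continuous [NormedSpace ℝ E] [NormedSpace 𝕜 E]
    {F F' : 𝕜 → ℝ → E} (hF : ∀ s, Continuous (F s)) (hF' : Continuous (Function.uncurry F'))
    (hderiv : ∀ s θ, HasDerivAt (fun s => F s θ) (F' s θ) s) (a b : ℝ) (s₀ : 𝕜) :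
    HasDerivAt (fun s => ∫ θ in a..b, F s θ) (∫ θ in a..b, F' s₀ θ) s₀ := by
  obtain ⟨C, hC⟩ := ((isCompact_closedBall s₀ 1).prod (isCompact_uIcc (a := a) (b := b))
    ).exists_bound_of_continuousOn hF'.continuousOn
  have hF'_meas : Continuous (F' s₀) := hF'.comp (Continuous.prodMk_right s₀)
  exact (intervalIntegral.hasDerivAt_integral_of_dominated_loc_of_deriv_le
    (closedBall_mem_nhds s₀ one_pos) (.of_forall fun s => (hF s).aestronglyMeasurable)
    ((hF s₀).intervalIntegrable a b) hF'_meas.aestronglyMeasurable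
    (.of_forall fun θ hθ s hs => hC (s, θ) ⟨hs, uIoc_subset_uIcc hθ⟩)
    intervalIntegrable_const (.of_forall fun θ _ s _ => hderiv s θ)).2

variable [NormedSpace ℂ E] [CompleteSpace E]

theorem iteratedDeriv_eq_intervalIntegral {f : ℂ → E} (hf : Differentiable ℂ f) (k : ℕ) (c : ℂ) :
    iteratedDeriv k f c = (k.factorial / (2 * Real.pi) : ℂ) •
      ∫ θ in (0 : ℝ)..2 * Real.pi, exp (-(k * (θ * I))) • f (circleMap c 1 θ) := by
  have cauchy := hf.diffContOnCl.circleIntegral_one_div_sub_center_pow_smul (c := c) one_pos k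
  have integrand (θ : ℝ) : deriv (circleMap c 1) θ •
      (1 / (circleMap c 1 θ - c) ^ (k + 1)) • f (circleMap c 1 θ) =
      I • exp (-(k * (θ * I))) • f (circleMap c 1 θ) := by
    rw [smul_smul, smul_smul, deriv_circleMap, circleMap_sub_center, exp_neg, exp_nat_mul]
    congr 1
    simp only [circleMap, ofReal_one]
    field_simp [exp_ne_zero]
    ring
  simp only [circleIntegral, integrand, intervalIntegral.integral_smul] at cauchy
  have hk : (k.factorial : ℂ) ≠ 0 := mod_cast k.factorial_ne_zero
  have hpi : (Real.pi : ℂ) ≠ 0 := mod_cast Real.pi_ne_zero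
  rw [← inv_smul_eq_iff₀ (by simp [hk, hpi]), smul_smul] at cauchy
  rw [← cauchy]
  congr 1
  field_simp

theorem hasDerivAt_iteratedDeriv_param [NormedSpace 𝕜 E] [SMulCommClass 𝕜 ℂ E]
    {F F' : 𝕜 → ℂ → E} (hF : ∀ s, Differentiable ℂ (F s)) (hF' : ∀ s, Differentiable ℂ (F' s))
    (hcont : Continuous (Function.uncurry F'))
    (hderiv : ∀ s z, HasDerivAt (fun s => F s z) (F' s z) s) (k : ℕ) (c : ℂ) (s₀ : 𝕜) :
    HasDerivAt (fun s => iteratedDeriv k (F s) c) (iteratedDeriv k (F' s₀) c) s₀ := by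
  simp only [fun s => iteratedDeriv_eq_intervalIntegral (hF s) k c,
    iteratedDeriv_eq_intervalIntegral (hF' s₀) k c]
  refine (hasDerivAt_intervalIntegral_of_continuous (fun s => ?_) ?_
    (fun s θ => (hderiv s (circleMap c 1 θ)).fun_const_smul _) _ _ s₀).const_smul _
  · have := (hF s).continuous
    fun_prop
  · have : Continuous fun p : 𝕜 × ℝ => F' p.1 (circleMap c 1 p.2) :=
      hcont.comp (continuous_fst.prodMk ((continuous_circleMap c 1).comp continuous_snd))
    simp only [Function.uncurry_def]
    fun_prop

end ParametricDerivatives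

theorem iteratedDeriv_sub_pow_smul_eq_zero {𝕜 E : Type*} [NontriviallyNormedField 𝕜] [CharZero 𝕜]
    [NormedAddCommGroup E] [NormedSpace 𝕜 E] [CompleteSpace E] {g : 𝕜 → E}
    {c : 𝕜} (hg : AnalyticAt 𝕜 g c) {k N : ℕ} (hk : k < N) :
    iteratedDeriv k (fun z => (z - c) ^ N • g z) c = 0 := by
  have analytic : AnalyticAt 𝕜 (fun z => (z - c) ^ N • g z) c := by fun_prop
  refine (natCast_le_analyticOrderAt_iff_iteratedDeriv_eq_zero analytic).1 ?_ k hk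
  exact (natCast_le_analyticOrderAt analytic).2 ⟨g, hg, .of_forall fun _ => rfl⟩

theorem inv_ofReal_pow_eq_exp_log {h : ℝ} (hh : 0 < h) (N : ℕ) :
    ((h : ℂ) ^ N)⁻¹ = exp (-N * (Real.log h : ℂ)) := by
  rw [neg_mul, exp_neg, exp_nat_mul, ← ofReal_exp, Real.exp_log hh]

theorem norm_inv_Gamma_add_one_le {r : ℝ} (hr : 0 < r) {z : ℂ} (hz : r⁻¹ ≤ ‖z‖) :
    ‖(Gamma (z + 1))⁻¹‖ ≤ r * ‖(Gamma z)⁻¹‖ := by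
  rw [one_div_Gamma_eq_self_mul_one_div_Gamma_add_one z, norm_mul, ← inv_mul_le_iff₀ hr]
  gcongr

theorem exists_norm_inv_Gamma_add_natCast_le (R : ℝ) {r : ℝ} (hr : 0 < r) :
    ∃ M, ∀ (d : ℕ) (z : ℂ), ‖z‖ ≤ R → ‖(Gamma (z + d + 1))⁻¹‖ ≤ M * r ^ d := by
  have bound_of_index (d : ℕ) : ∃ B, ∀ z : ℂ, ‖z‖ ≤ R → ‖(Gamma (z + d + 1))⁻¹‖ ≤ B := by
    have continuous : Continuous fun z : ℂ => (Gamma (z + d + 1))⁻¹ :=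
      differentiable_one_div_Gamma.continuous.comp (by fun_prop)
    simpa using (isCompact_closedBall (0 : ℂ) R).exists_bound_of_continuousOn
      continuous.continuousOn
  choose B hB using bound_of_index
  obtain ⟨D, hD⟩ := exists_nat_ge (R + r⁻¹)
  obtain ⟨M, hM⟩ := ((finite_Iic D).image fun d => B d / r ^ d).bddAbove
  have bound_initial (d : ℕ) (hd : d ≤ D) (z : ℂ) (hz : ‖z‖ ≤ R) :
      ‖(Gamma (z + d + 1))⁻¹‖ ≤ M * r ^ d :=
    (hB d z hz).trans ((div_le_iff₀ (pow_pos hr d)).1 (hM (mem_image_of_mem _ hd)))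
  refine ⟨M, fun d z hz => ?_⟩
  rcases le_total d D with hd | hd
  · exact bound_initial d hd z hz
  induction d, hd using Nat.le_induction with
  | base => exact bound_initial D le_rfl z hz
  | succ d hd ih =>
    have inv_le_norm : r⁻¹ ≤ ‖z + (d + 1 : ℕ)‖ := by
      have triangle := norm_sub_le (z + (d + 1 : ℕ)) z
      rw [add_sub_cancel_left, norm_natCast, Nat.cast_succ] at triangle
      have : (D : ℝ) ≤ d := mod_cast hd
      linarith
    calc ‖(Gamma (z + (d + 1 : ℕ) + 1))⁻¹‖ ≤ r * ‖(Gamma (z + (d + 1 : ℕ)))⁻¹‖ :=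
          norm_inv_Gamma_add_one_le hr inv_le_norm
      _ ≤ r * (M * r ^ d) := by
          rw [Nat.cast_succ, ← add_assoc]
          gcongr
      _ = M * r ^ (d + 1) := by ring

/-- The `d`-th term of the series `D^m F_n(z, h)` in the logarithmic variable `s = log h`, which is
allowed to be complex. -/
noncomputable def mirrorTerm (n m d : ℕ) (s z : ℂ) : ℂ :=
  exp (-((n : ℂ) + 1) * (z + d) * s) * (z + d) ^ m * (Gamma (z + d + 1))⁻¹ ^ (n + 1)

/-- The function `D^m F_n(z, h)` in the logarithmic variable `s = log h`, which is allowed to be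
complex. -/
noncomputable def mirrorSeries (n m : ℕ) (s z : ℂ) : ℂ :=
  ∑' d, mirrorTerm n m d s z

/-- The `k`-th Taylor coefficient at `z = 0` of `D^m F_n(z, h)`, that is `D^m ξ_k`, in the
logarithmic variable `s = log h`, which is allowed to be complex. -/
noncomputable def mirrorCoeff (n m k : ℕ) (s : ℂ) : ℂ :=
  (1 / (k.factorial : ℂ)) * iteratedDeriv k (mirrorSeries n m s) 0

section Term

variable (n m d : ℕ)

theorem differentiable_mirrorTerm (s : ℂ) : Differentiable ℂ (mirrorTerm n m d s) := by
  have : Differentiable ℂ fun z : ℂ => (Gamma (z + d + 1))⁻¹ :=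
    differentiable_one_div_Gamma.comp (by fun_prop)
  unfold mirrorTerm
  fun_prop

theorem continuous_uncurry_mirrorTerm : Continuous (Function.uncurry (mirrorTerm n m d)) := by
  have : Continuous fun p : ℂ × ℂ => (Gamma (p.2 + d + 1))⁻¹ :=
    differentiable_one_div_Gamma.continuous.comp (by fun_prop)
  simp only [Function.uncurry_def, mirrorTerm]
  fun_prop

theorem hasDerivAt_mirrorTerm (s z : ℂ) :
    HasDerivAt (fun s => mirrorTerm n m d s z) (-((n : ℂ) + 1) * mirrorTerm n (m + 1) d s z) s := by
  have hasDerivAt_exp := ((hasDerivAt_id s).const_mul (-((n : ℂ) + 1) * (z + d))).cexp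
  refine ((hasDerivAt_exp.mul_const ((z + d) ^ m)).mul_const
    ((Gamma (z + d + 1))⁻¹ ^ (n + 1))).congr_deriv ?_
  simp only [mirrorTerm, id_eq]
  ring

theorem mirrorTerm_add_one_zero (s z : ℂ) :
    mirrorTerm n (n + 1) 0 s z = z ^ (n + 1) * mirrorTerm n 0 0 s z := by
  simp only [mirrorTerm, Nat.cast_zero, add_zero]
  ring

theorem mirrorTerm_add_one_succ (s z : ℂ) :
    mirrorTerm n (n + 1) (d + 1) s z = exp (-((n : ℂ) + 1) * s) * mirrorTerm n 0 d s z := by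
  have gamma_shift := one_div_Gamma_eq_self_mul_one_div_Gamma_add_one (z + d + 1)
  have exp_shift : exp (-((n : ℂ) + 1) * (z + d + 1) * s) =
      exp (-((n : ℂ) + 1) * s) * exp (-((n : ℂ) + 1) * (z + d) * s) := by
    rw [← exp_add]
    ring_nf
  simp only [mirrorTerm, Nat.cast_succ, ← add_assoc, gamma_shift, exp_shift, mul_pow]
  ring

theorem norm_mirrorTerm_le {R : ℝ} {s z : ℂ} (hs : ‖s‖ ≤ R) (hz : ‖z‖ ≤ R) :
    ‖mirrorTerm n m d s z‖ ≤ Real.exp ((n + 1) * (R + d) * R) *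
      (m.factorial * Real.exp (R + d)) * ‖(Gamma (z + d + 1))⁻¹‖ ^ (n + 1) := by
  have norm_base_le : ‖z + d‖ ≤ R + d := by
    simpa using (norm_add_le z d).trans (add_le_add_left hz _)
  have norm_exp_le : ‖exp (-((n : ℂ) + 1) * (z + d) * s)‖ ≤ Real.exp ((n + 1) * (R + d) * R) := by
    refine (norm_exp_le_exp_norm _).trans (Real.exp_le_exp.2 ?_)
    have norm_order : ‖(n : ℂ) + 1‖ = n + 1 := by
      rw [← Nat.cast_succ, norm_natCast, Nat.cast_succ]
    rw [norm_mul, norm_mul, norm_neg, norm_order]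
    have := (norm_nonneg z).trans hz
    gcongr
  have norm_pow_le : ‖(z + d) ^ m‖ ≤ m.factorial * Real.exp (R + d) := by
    rw [norm_pow, ← div_le_iff₀' (by positivity)]
    exact (Real.pow_div_factorial_le_exp _ (norm_nonneg _) m).trans
      (Real.exp_le_exp.2 norm_base_le)
  rw [mirrorTerm, norm_mul, norm_mul, norm_pow (Gamma _)⁻¹]
  gcongr

theorem exists_summable_norm_mirrorTerm_le (R : ℝ) :
    ∃ u : ℕ → ℝ, Summable u ∧
      ∀ (d : ℕ) (s z : ℂ), ‖s‖ ≤ R → ‖z‖ ≤ R → ‖mirrorTerm n m d s z‖ ≤ u d := by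
  obtain ⟨M, hM⟩ := exists_norm_inv_Gamma_add_natCast_le R (Real.exp_pos (-(R + 2)))
  refine ⟨fun d => m.factorial * M ^ (n + 1) * Real.exp ((n + 1) * R * R + R) * Real.exp (-d),
    Real.summable_exp_neg_nat.mul_left _, fun d s z hs hz => ?_⟩
  have hM_nonneg : 0 ≤ M := by
    simpa only [pow_zero, mul_one] using (norm_nonneg _).trans (hM 0 z hz)
  have exponent_le : (n + 1) * (R + d) * R + (R + d) + (n + 1 : ℕ) * (d * -(R + 2)) ≤
      (n + 1) * R * R + R + -d := by
    push_cast
    nlinarith [mul_nonneg (Nat.cast_nonneg (α := ℝ) n) (Nat.cast_nonneg (α := ℝ) d)]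
  calc ‖mirrorTerm n m d s z‖
      ≤ Real.exp ((n + 1) * (R + d) * R) * (m.factorial * Real.exp (R + d)) *
        (M * Real.exp (-(R + 2)) ^ d) ^ (n + 1) := by
        grw [norm_mirrorTerm_le n m d hs hz, hM d z hz]
    _ = m.factorial * M ^ (n + 1) *
        Real.exp ((n + 1) * (R + d) * R + (R + d) + (n + 1 : ℕ) * (d * -(R + 2))) := by
        rw [Real.exp_add _ (_ * _), Real.exp_add _ (R + d), Real.exp_nat_mul, Real.exp_nat_mul]
        ring
    _ ≤ m.factorial * M ^ (n + 1) * Real.exp ((n + 1) * R * R + R + -d) := by gcongr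
    _ = m.factorial * M ^ (n + 1) * Real.exp ((n + 1) * R * R + R) * Real.exp (-d) := by
        rw [Real.exp_add, ← mul_assoc]

end Term

section Series

variable (n m : ℕ)

theorem summable_mirrorTerm (s z : ℂ) : Summable fun d => mirrorTerm n m d s z := by
  obtain ⟨u, hu, hle⟩ := exists_summable_norm_mirrorTerm_le n m (max ‖s‖ ‖z‖)
  exact .of_norm_bounded hu fun d => hle d s z (le_max_left _ _) (le_max_right _ _)

theorem differentiable_mirrorSeries (s : ℂ) : Differentiable ℂ (mirrorSeries n m s) := by
  intro z
  obtain ⟨u, hu, hle⟩ := exists_summable_norm_mirrorTerm_le n m (max ‖s‖ (‖z‖ + 1))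
  have differentiableOn : DifferentiableOn ℂ (mirrorSeries n m s) (ball 0 (‖z‖ + 1)) :=
    differentiableOn_tsum_of_summable_norm hu
      (fun d => (differentiable_mirrorTerm n m d s).differentiableOn) isOpen_ball
      fun d w hw => hle d s w (le_max_left _ _) (le_max_of_le_right (mem_ball_zero_iff.1 hw).le)
  exact differentiableOn.differentiableAt (isOpen_ball.mem_nhds (by simp))

theorem hasDerivAt_mirrorSeries (s z : ℂ) :
    HasDerivAt (fun s => mirrorSeries n m s z) (-((n : ℂ) + 1) * mirrorSeries n (m + 1) s z) s := by
  obtain ⟨u, hu, hle⟩ := exists_summable_norm_mirrorTerm_le n (m + 1) (max (‖s‖ + 1) ‖z‖)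
  simp only [mirrorSeries, ← tsum_mul_left]
  refine hasDerivAt_tsum_of_isPreconnected (hu.mul_left ‖-((n : ℂ) + 1)‖)
    (isOpen_ball (x := 0) (ε := ‖s‖ + 1)) (convex_ball _ _).isPreconnected
    (fun d w _ => hasDerivAt_mirrorTerm n m d w z) (fun d w hw => ?_) (y₀ := s) (by simp)
    (summable_mirrorTerm n m s z) (by simp)
  rw [norm_mul]
  gcongr
  exact hle d w z (le_max_of_le_left (mem_ball_zero_iff.1 hw).le) (le_max_right _ _)

theorem continuous_uncurry_mirrorSeries : Continuous (Function.uncurry (mirrorSeries n m)) := by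
  rw [continuous_iff_continuousAt]
  intro p
  obtain ⟨u, hu, hle⟩ := exists_summable_norm_mirrorTerm_le n m (‖p‖ + 1)
  have continuousOn : ContinuousOn (Function.uncurry (mirrorSeries n m)) (ball 0 (‖p‖ + 1)) := by
    refine continuousOn_tsum (fun d => (continuous_uncurry_mirrorTerm n m d).continuousOn) hu
      fun d q hq => ?_
    have hq' := (mem_ball_zero_iff.1 hq).le
    exact hle d q.1 q.2 ((norm_fst_le q).trans hq') ((norm_snd_le q).trans hq')
  exact continuousOn.continuousAt (isOpen_ball.mem_nhds (by simp))

theorem mirrorSeries_add_one (s z : ℂ) :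
    mirrorSeries n (n + 1) s z =
      exp (-((n : ℂ) + 1) * s) * mirrorSeries n 0 s z + z ^ (n + 1) * mirrorTerm n 0 0 s z := by
  rw [mirrorSeries, (summable_mirrorTerm n (n + 1) s z).tsum_eq_zero_add]
  simp only [mirrorTerm_add_one_zero, mirrorTerm_add_one_succ, tsum_mul_left, mirrorSeries]
  ring

theorem mirrorF_eq_mirrorSeries (z : ℂ) {h : ℝ} (hh : 0 < h) :
    mirrorF n z h = mirrorSeries n 0 (Real.log h) z := by
  rw [mirrorF, ← tsum_mul_left, mirrorSeries]
  refine tsum_congr fun d => ?_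
  rw [inv_ofReal_pow_eq_exp_log hh, mirrorTerm, pow_zero, mul_one, ← mul_assoc, ← exp_add]
  push_cast
  ring_nf

end Series

theorem mirrorD_eq_of_eventuallyEq_comp_log {n : ℕ} {φ : ℝ → ℂ} {X : ℂ → ℂ} {y : ℂ} {h : ℝ}
    (hh : 0 < h) (hφ : φ =ᶠ[𝓝 h] fun x => X (Real.log x))
    (hX : HasDerivAt X (-((n : ℂ) + 1) * y) (Real.log h)) : mirrorD n φ h = y := by
  have deriv_eq := (hX.comp h (Real.hasDerivAt_log hh.ne').ofReal_comp).congr_of_eventuallyEq hφ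
  rw [mirrorD, deriv_eq.deriv]
  have : (h : ℂ) ≠ 0 := mod_cast hh.ne'
  have : (n : ℂ) + 1 ≠ 0 := n.cast_add_one_ne_zero
  push_cast
  field_simp

section Coeff

variable (n m k : ℕ)

theorem hasDerivAt_mirrorCoeff (s : ℂ) :
    HasDerivAt (mirrorCoeff n m k) (-((n : ℂ) + 1) * mirrorCoeff n (m + 1) k s) s := by
  have differentiable (s : ℂ) := differentiable_mirrorSeries n (m + 1) s
  have := (hasDerivAt_iteratedDeriv_param (differentiable_mirrorSeries n m)
    (fun s => (differentiable s).const_mul (-((n : ℂ) + 1)))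
    (continuous_const.mul (continuous_uncurry_mirrorSeries n (m + 1)))
    (hasDerivAt_mirrorSeries n m) k 0 s).const_mul (1 / (k.factorial : ℂ))
  refine this.congr_deriv ?_
  rw [iteratedDeriv_const_mul _ (differentiable s).contDiff.contDiffAt, mirrorCoeff]
  ring

variable {n k} in
theorem mirrorCoeff_add_one (hk : k ≤ n) (s : ℂ) :
    mirrorCoeff n (n + 1) k s = exp (-((n : ℂ) + 1) * s) * mirrorCoeff n 0 k s := by
  have smooth_series : ContDiffAt ℂ k (mirrorSeries n 0 s) 0 :=
    (differentiable_mirrorSeries n 0 s).contDiff.contDiffAt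
  have differentiable_term := differentiable_mirrorTerm n 0 0 s
  have remainder_vanishes :
      iteratedDeriv k (fun z => z ^ (n + 1) * mirrorTerm n 0 0 s z) 0 = 0 := by
    simpa using iteratedDeriv_sub_pow_smul_eq_zero (differentiable_term.analyticAt 0)
      (Nat.lt_succ_of_le hk)
  rw [mirrorCoeff, funext (mirrorSeries_add_one n s),
    iteratedDeriv_fun_add (contDiffAt_const.mul smooth_series)
      (contDiffAt_fun_id.pow _ |>.mul differentiable_term.contDiff.contDiffAt),
    remainder_vanishes, iteratedDeriv_const_mul _ smooth_series, mirrorCoeff]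
  ring

theorem mirrorXi_eq_mirrorCoeff {h : ℝ} (hh : 0 < h) :
    mirrorXi n k h = mirrorCoeff n 0 k (Real.log h) := by
  simp only [mirrorXi, mirrorF_eq_mirrorSeries n _ hh, mirrorCoeff]

theorem iterate_mirrorD_mirrorXi {h : ℝ} (hh : 0 < h) :
    (mirrorD n)^[m] (mirrorXi n k) h = mirrorCoeff n m k (Real.log h) := by
  induction m generalizing h with
  | zero => exact mirrorXi_eq_mirrorCoeff n k hh
  | succ m ih =>
    rw [Function.iterate_succ_apply']
    exact mirrorD_eq_of_eventuallyEq_comp_log hh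
      (by filter_upwards [lt_mem_nhds hh] with x hx using ih hx) (hasDerivAt_mirrorCoeff n m k _)

theorem contDiffOn_mirrorXi : ContDiffOn ℝ (⊤ : ℕ∞) (mirrorXi n k) (Ioi 0) := by
  have entire : Differentiable ℂ (mirrorCoeff n 0 k) := fun s =>
    (hasDerivAt_mirrorCoeff n 0 k s).differentiableAt
  have smooth_log : ContDiffOn ℝ (⊤ : ℕ∞) (fun h => (Real.log h : ℂ)) (Ioi 0) :=
    ofRealCLM.contDiff.comp_contDiffOn (Real.contDiffOn_log.mono fun _ hh => ne_of_gt hh)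
  exact ((entire.contDiff.restrict_scalars ℝ).comp_contDiffOn smooth_log).congr fun h hh =>
    mirrorXi_eq_mirrorCoeff n k hh

end Coeff

theorem mirrorXi_hypergeometric_ODE (n k : ℕ) (hn : 1 ≤ n) (hk : k ≤ n) :
    ContDiffOn ℝ (⊤ : ℕ∞) (mirrorXi n k) (Set.Ioi (0 : ℝ)) ∧
    ∀ h : ℝ, 0 < h →
      (mirrorD n)^[n + 1] (mirrorXi n k) h = ((h : ℂ) ^ (n + 1))⁻¹ * mirrorXi n k h := by
  refine ⟨contDiffOn_mirrorXi n k, fun h hh => ?_⟩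
  rw [iterate_mirrorD_mirrorXi n (n + 1) k hh, mirrorCoeff_add_one hk,
    mirrorXi_eq_mirrorCoeff n k hh, inv_ofReal_pow_eq_exp_log hh, Nat.cast_succ]
end

section
/- Fix an integer n ≥ 1 and an integer k with 0 ≤ k ≤ n. Then as h → +∞ along the reals, ξ_k(h) − (−(n+1)·log h)^k/k! = O((log h)^{k−1}); that is, there exist constants C > 0 and h_0 > 1 such that |ξ_k(h) − (−(n+1)·log h)^k/k!| ≤ C·(log h)^{k−1} for all h ≥ h_0. -/
/-!
Put `z = h ^ (-(n + 1))` and `c = -(n + 1) log h`. Then `F_n(α, h) = exp (c α) G(z, α)` with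
`G(z, α) = ∑ d, z ^ d / Γ(α + d + 1) ^ (n + 1)`. Since `1 / Γ(α + d)` is bounded uniformly in `d`
for `α` in a compact set, `G(z, ·)` is bounded on the unit circle uniformly for small `z`, so by
Cauchy's estimates its derivatives at `0` stay bounded as `z → 0`. In the Leibniz expansion of the
`k`-th derivative of `exp (c α) G(z, α)` at `0` every term other than `c ^ k G(z, 0)` is therefore
`O(c ^ (k - 1))`, and `G(z, 0) = 1 + z G(z, 1) = 1 + O(z)`, where `z` is negligible against `1 / c`.
-/

open Complex

open Filter Asymptotics Topology

section ReciprocalGamma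

lemma norm_inv_Gamma_add_one_le_s3 {s : ℂ} (hs : 1 ≤ ‖s‖) :
    ‖(Gamma (s + 1))⁻¹‖ ≤ ‖(Gamma s)⁻¹‖ := by
  rw [one_div_Gamma_eq_self_mul_one_div_Gamma_add_one s, norm_mul]
  exact le_mul_of_one_le_left (norm_nonneg _) hs

lemma exists_norm_inv_Gamma_add_natCast_le_s3 {K : Set ℂ} (hK : IsCompact K) :
    ∃ M : ℝ, ∀ s ∈ K, ∀ d : ℕ, ‖(Gamma (s + d))⁻¹‖ ≤ M := by
  obtain ⟨R, hR⟩ := hK.isBounded.exists_norm_le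
  obtain ⟨N, hN⟩ := exists_nat_ge (R + 1)
  obtain ⟨M, hM⟩ := (isCompact_closedBall (0 : ℂ) (R + N)).exists_bound_of_continuousOn
    differentiable_one_div_Gamma.continuous.continuousOn
  have initial_bound (s : ℂ) (hs : s ∈ K) (d : ℕ) (hd : d ≤ N) : ‖(Gamma (s + d))⁻¹‖ ≤ M := by
    refine hM _ (mem_closedBall_zero_iff.2 ((norm_add_le _ _).trans ?_))
    rw [norm_natCast]
    exact add_le_add (hR s hs) (by exact_mod_cast hd)
  refine ⟨M, fun s hs d => ?_⟩
  induction d with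
  | zero => exact initial_bound s hs 0 N.zero_le
  | succ d ih =>
    rcases le_or_gt (d + 1) N with hd | hd
    · exact initial_bound s hs (d + 1) hd
    have one_le_norm : 1 ≤ ‖s + d‖ := by
      have hNd : (N : ℝ) ≤ d := by exact_mod_cast Nat.lt_succ_iff.1 hd
      have htri : (d : ℝ) ≤ ‖s + d‖ + ‖s‖ := by
        simpa only [add_sub_cancel_left, norm_natCast] using norm_sub_le (s + d) s
      linarith [hR s hs]
    rw [Nat.cast_succ, ← add_assoc]
    exact (norm_inv_Gamma_add_one_le_s3 one_le_norm).trans ih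

end ReciprocalGamma

/-- The series `∑ d, z ^ d / Γ(α + d + 1) ^ m`. With `m = n + 1` and `z = h ^ (-(n + 1))` it is the
factor of `mirrorF n α h` that remains bounded as `h → ∞`. -/
noncomputable def gammaSeries (m : ℕ) (z α : ℂ) : ℂ :=
  ∑' d : ℕ, z ^ d * ((Gamma (α + d + 1))⁻¹) ^ m

section GammaSeries

lemma exists_norm_gammaSeries_term_le (m : ℕ) {K : Set ℂ} (hK : IsCompact K) :
    ∃ B : ℝ, 0 ≤ B ∧ ∀ α ∈ K, ∀ (z : ℂ) (d : ℕ),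
      ‖z ^ d * ((Gamma (α + d + 1))⁻¹) ^ m‖ ≤ B * ‖z‖ ^ d := by
  obtain ⟨M, hM⟩ := exists_norm_inv_Gamma_add_natCast_le_s3 hK
  refine ⟨|M| ^ m, by positivity, fun α hα z d => ?_⟩
  have hΓ : ‖(Gamma (α + d + 1))⁻¹‖ ≤ |M| := by
    simpa only [Nat.cast_succ, add_assoc] using (hM α hα (d + 1)).trans (le_abs_self M)
  rw [norm_mul, norm_pow, norm_pow, mul_comm]
  gcongr

variable {z : ℂ}

lemma summable_gammaSeries_term (m : ℕ) (hz : ‖z‖ < 1) (α : ℂ) :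
    Summable fun d : ℕ => z ^ d * ((Gamma (α + d + 1))⁻¹) ^ m := by
  obtain ⟨B, -, hB⟩ := exists_norm_gammaSeries_term_le m (isCompact_singleton (x := α))
  exact Summable.of_norm_bounded
    ((summable_geometric_of_lt_one (norm_nonneg z) hz).mul_left B) (hB α rfl z)

lemma gammaSeries_eq_add_mul (m : ℕ) (hz : ‖z‖ < 1) (α : ℂ) :
    gammaSeries m z α = ((Gamma (α + 1))⁻¹) ^ m + z * gammaSeries m z (α + 1) := by
  rw [gammaSeries, (summable_gammaSeries_term m hz α).tsum_eq_zero_add, gammaSeries,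
    ← tsum_mul_left]
  congr 1
  · simp
  · refine tsum_congr fun d => ?_
    rw [pow_succ', mul_assoc, Nat.cast_succ, add_right_comm α 1, ← add_assoc α]

lemma differentiable_gammaSeries (m : ℕ) (hz : ‖z‖ < 1) : Differentiable ℂ (gammaSeries m z) := by
  intro α
  obtain ⟨B, -, hB⟩ := exists_norm_gammaSeries_term_le m (isCompact_closedBall α 1)
  have term_differentiable (d : ℕ) :
      Differentiable ℂ fun β : ℂ => z ^ d * ((Gamma (β + d + 1))⁻¹) ^ m :=
    ((differentiable_one_div_Gamma.comp
      ((differentiable_id.add_const _).add_const _)).pow m).const_mul _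
  have series_differentiableOn : DifferentiableOn ℂ (gammaSeries m z) (Metric.ball α 1) :=
    differentiableOn_tsum_of_summable_norm
      ((summable_geometric_of_lt_one (norm_nonneg z) hz).mul_left B)
      (fun d => (term_differentiable d).differentiableOn) Metric.isOpen_ball
      (fun d β hβ => hB β (Metric.ball_subset_closedBall hβ) z d)
  exact series_differentiableOn.differentiableAt (Metric.ball_mem_nhds α one_pos)

lemma exists_norm_gammaSeries_le (m : ℕ) {K : Set ℂ} (hK : IsCompact K) :
    ∃ B : ℝ, ∀ z : ℂ, ‖z‖ ≤ 1 / 2 → ∀ α ∈ K, ‖gammaSeries m z α‖ ≤ B := by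
  obtain ⟨B, hB₀, hB⟩ := exists_norm_gammaSeries_term_le m hK
  refine ⟨B * 2, fun z hz α hα => ?_⟩
  refine tsum_of_norm_bounded (hasSum_geometric_two.mul_left B) fun d => (hB α hα z d).trans ?_
  gcongr

lemma gammaSeries_sub_isBigO (m : ℕ) (α : ℂ) :
    (fun z => gammaSeries m z α - ((Gamma (α + 1))⁻¹) ^ m) =O[𝓝 0] fun z => z := by
  obtain ⟨B, hB⟩ := exists_norm_gammaSeries_le m (isCompact_singleton (x := α + 1))
  refine IsBigO.of_bound B ?_
  filter_upwards [tendsto_norm_zero.eventually_le_const one_half_pos] with z hz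
  rw [gammaSeries_eq_add_mul m (hz.trans_lt one_half_lt_one), add_sub_cancel_left, norm_mul,
    mul_comm]
  exact mul_le_mul_of_nonneg_right (hB z hz _ rfl) (norm_nonneg z)

lemma iteratedDeriv_gammaSeries_isBigO_one (m j : ℕ) (α : ℂ) :
    (fun z => iteratedDeriv j (gammaSeries m z) α) =O[𝓝 0] fun _ => (1 : ℂ) := by
  obtain ⟨B, hB⟩ := exists_norm_gammaSeries_le m (isCompact_sphere α 1)
  refine IsBigO.of_bound (j.factorial * B / 1 ^ j) ?_
  filter_upwards [tendsto_norm_zero.eventually_le_const one_half_pos] with z hz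
  rw [norm_one, mul_one]
  exact norm_iteratedDeriv_le_of_forall_mem_sphere_norm_le j one_pos
    (differentiable_gammaSeries m (hz.trans_lt one_half_lt_one)).diffContOnCl (hB z hz)

end GammaSeries

section ExponentialFactor

lemma iteratedDeriv_cexp_const_mul_mul {k : ℕ} {g : ℂ → ℂ} {x : ℂ} (hg : ContDiffAt ℂ k g x)
    (c : ℂ) :
    iteratedDeriv k (fun y => exp (c * y) * g y) x =
      exp (c * x) * ∑ i ∈ Finset.range (k + 1),
        (k.choose i : ℂ) * (c ^ i * iteratedDeriv (k - i) g x) := by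
  have hexp : ContDiffAt ℂ k (fun y => exp (c * y)) x := by fun_prop
  rw [iteratedDeriv_fun_mul hexp hg, Finset.mul_sum]
  refine Finset.sum_congr rfl fun i _ => ?_
  rw [iteratedDeriv_cexp_const_mul]
  ring

variable {ι : Type*} {l : Filter ι} {k : ℕ}

lemma pow_isBigO_zpow_sub_one {𝕜 : Type*} [NormedField 𝕜] {u : ι → 𝕜}
    (hu : ∀ᶠ i in l, 1 ≤ ‖u i‖) {j : ℕ} (hj : j < k) :
    (fun i => u i ^ j) =O[l] fun i => u i ^ ((k : ℤ) - 1) := by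
  refine IsBigO.of_bound' (hu.mono fun i hi => ?_)
  rw [norm_pow, norm_zpow, ← zpow_natCast]
  exact zpow_le_zpow_right₀ hi (by lia)

variable {c : ι → ℂ} {g : ι → ℂ → ℂ}

lemma iteratedDeriv_cexp_mul_sub_isBigO (hc : ∀ᶠ i in l, 1 ≤ ‖c i‖)
    (hg : ∀ᶠ i in l, ContDiffAt ℂ k (g i) 0)
    (hderiv : ∀ j ≤ k, (fun i => iteratedDeriv j (g i) 0) =O[l] fun _ => (1 : ℂ)) :
    (fun i => iteratedDeriv k (fun y => exp (c i * y) * g i y) 0 - c i ^ k * g i 0) =O[l]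
      fun i => c i ^ ((k : ℤ) - 1) := by
  have leibniz : (fun i =>
      ∑ j ∈ Finset.range k, (k.choose j : ℂ) * (c i ^ j * iteratedDeriv (k - j) (g i) 0)) =ᶠ[l]
        fun i => iteratedDeriv k (fun y => exp (c i * y) * g i y) 0 - c i ^ k * g i 0 := by
    filter_upwards [hg] with i hi
    rw [iteratedDeriv_cexp_const_mul_mul hi, Finset.sum_range_succ]
    simp
  refine IsBigO.congr' (IsBigO.fun_sum fun j hj => ?_) leibniz EventuallyEq.rfl
  have power_times_bounded :=
    (pow_isBigO_zpow_sub_one hc (Finset.mem_range.1 hj)).mul (hderiv (k - j) (k.sub_le j))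
  simpa only [mul_one] using power_times_bounded.const_mul_left (k.choose j : ℂ)

lemma iteratedDeriv_cexp_mul_sub_pow_isBigO (hc : ∀ᶠ i in l, 1 ≤ ‖c i‖)
    (hg : ∀ᶠ i in l, ContDiffAt ℂ k (g i) 0)
    (hderiv : ∀ j ≤ k, (fun i => iteratedDeriv j (g i) 0) =O[l] fun _ => (1 : ℂ))
    (hone : (fun i => g i 0 - 1) =O[l] fun i => (c i)⁻¹) :
    (fun i => iteratedDeriv k (fun y => exp (c i * y) * g i y) 0 - c i ^ k) =O[l]
      fun i => c i ^ ((k : ℤ) - 1) := by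
  have leading : (fun i => c i ^ k * (g i 0 - 1)) =O[l] fun i => c i ^ ((k : ℤ) - 1) := by
    refine ((isBigO_refl (fun i => c i ^ k) l).mul hone).congr' EventuallyEq.rfl ?_
    filter_upwards [hc] with i hi
    have hci : c i ≠ 0 := norm_pos_iff.1 (one_pos.trans_le hi)
    rw [zpow_sub_one₀ hci, zpow_natCast]
  refine ((iteratedDeriv_cexp_mul_sub_isBigO hc hg hderiv).add leading).congr_left fun i => ?_
  ring

end ExponentialFactor

section Mirror

lemma mirrorF_eq_cexp_mul_gammaSeries (n : ℕ) (α : ℂ) (h : ℝ) :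
    mirrorF n α h = exp (-((n : ℂ) + 1) * Real.log h * α) *
      gammaSeries (n + 1) ((h : ℂ) ^ (n + 1))⁻¹ α := by
  simp only [mirrorF, gammaSeries, inv_pow, ← pow_mul, mul_right_comm _ α]

variable {m : ℕ}

lemma inv_ofReal_pow_isBigO_inv (hm : m ≠ 0) :
    (fun h : ℝ => ((h : ℂ) ^ m)⁻¹) =O[atTop] fun h : ℝ => h⁻¹ := by
  refine IsBigO.of_bound' ((eventually_ge_atTop 1).mono fun h hh => ?_)
  have hpos : 0 < h := one_pos.trans_le hh
  rw [norm_inv, norm_inv, norm_pow, norm_real, Real.norm_of_nonneg hpos.le]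
  exact inv_anti₀ hpos (le_self_pow₀ hh hm)

lemma tendsto_inv_ofReal_pow_atTop_zero (hm : m ≠ 0) :
    Tendsto (fun h : ℝ => ((h : ℂ) ^ m)⁻¹) atTop (𝓝 0) :=
  (inv_ofReal_pow_isBigO_inv hm).trans_tendsto tendsto_inv_atTop_zero

lemma const_mul_log_isBigO_id (a : ℂ) :
    (fun h : ℝ => a * Real.log h) =O[atTop] fun h : ℝ => h :=
  (isBigO_ofReal_left.2 Real.isLittleO_log_id_atTop.isBigO).const_mul_left a

lemma eventually_one_le_norm_const_mul_log {a : ℂ} (ha : a ≠ 0) :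
    ∀ᶠ h : ℝ in atTop, 1 ≤ ‖a * Real.log h‖ := by
  filter_upwards [Real.tendsto_log_atTop.eventually_ge_atTop ‖a‖⁻¹] with h hh
  rw [norm_mul, norm_real]
  exact (inv_le_iff_one_le_mul₀' (norm_pos_iff.2 ha)).1 (hh.trans (Real.le_norm_self _))

lemma gammaSeries_zero_sub_one_isBigO_inv_const_mul_log (hm : m ≠ 0) {a : ℂ} (ha : a ≠ 0) :
    (fun h : ℝ => gammaSeries m ((h : ℂ) ^ m)⁻¹ 0 - 1) =O[atTop]
      fun h : ℝ => (a * Real.log h)⁻¹ := by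
  have isBigO_z : (fun h : ℝ => gammaSeries m ((h : ℂ) ^ m)⁻¹ 0 - 1) =O[atTop]
      fun h : ℝ => ((h : ℂ) ^ m)⁻¹ := by
    simpa [Function.comp_def] using
      (gammaSeries_sub_isBigO m 0).comp_tendsto (tendsto_inv_ofReal_pow_atTop_zero hm)
  refine isBigO_z.trans ((inv_ofReal_pow_isBigO_inv hm).trans
    ((const_mul_log_isBigO_id a).inv_rev ?_))
  filter_upwards [eventually_one_le_norm_const_mul_log ha] with h hh hzero
  norm_num [hzero] at hh

lemma mirrorXi_sub_isBigO (n k : ℕ) :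
    (fun h : ℝ => mirrorXi n k h - (-((n : ℂ) + 1) * Real.log h) ^ k / k.factorial) =O[atTop]
      fun h : ℝ => Real.log h ^ ((k : ℤ) - 1) := by
  have ha : -((n : ℂ) + 1) ≠ 0 := neg_ne_zero.2 n.cast_add_one_ne_zero
  have hz := tendsto_inv_ofReal_pow_atTop_zero n.succ_ne_zero
  have hsmooth : ∀ᶠ h : ℝ in atTop,
      ContDiffAt ℂ k (gammaSeries (n + 1) ((h : ℂ) ^ (n + 1))⁻¹) 0 := by
    filter_upwards [hz.eventually (tendsto_norm_zero.eventually_lt_const one_pos)] with h hh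
    exact (differentiable_gammaSeries _ hh).contDiff.contDiffAt
  have hξ := (iteratedDeriv_cexp_mul_sub_pow_isBigO
    (eventually_one_le_norm_const_mul_log ha) hsmooth
    (fun j _ => (iteratedDeriv_gammaSeries_isBigO_one (n + 1) j 0).comp_tendsto hz)
    (gammaSeries_zero_sub_one_isBigO_inv_const_mul_log n.succ_ne_zero ha)).const_mul_left
    (1 / (k.factorial : ℂ))
  have hlog : (fun h : ℝ => (-((n : ℂ) + 1) * Real.log h) ^ ((k : ℤ) - 1)) =O[atTop]
      fun h : ℝ => Real.log h ^ ((k : ℤ) - 1) := by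
    simp only [mul_zpow, ← ofReal_zpow]
    exact (isBigO_ofReal_left.2 (isBigO_refl _ _)).const_mul_left _
  refine (hξ.trans hlog).congr_left fun h => ?_
  simp only [mirrorXi, mirrorF_eq_cexp_mul_gammaSeries]
  ring

end Mirror

theorem mirrorXi_asymptotics_general (n k : ℕ) :
    ∃ C : ℝ, 0 < C ∧ ∃ h₀ : ℝ, 1 < h₀ ∧ ∀ h : ℝ, h₀ ≤ h →
      ‖mirrorXi n k h - (-((n : ℂ) + 1) * (Real.log h : ℂ)) ^ k / (k.factorial : ℂ)‖ ≤
        C * (Real.log h) ^ ((k : ℤ) - 1) := by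
  obtain ⟨C, hC, hbound⟩ := (mirrorXi_sub_isBigO n k).exists_pos
  obtain ⟨h₁, hh₁⟩ := eventually_atTop.1 hbound.bound
  refine ⟨C, hC, max h₁ 2, one_lt_two.trans_le (le_max_right _ _), fun h hh => ?_⟩
  have hlog : 0 ≤ Real.log h := Real.log_nonneg (one_le_two.trans ((le_max_right _ _).trans hh))
  simpa only [Real.norm_of_nonneg (zpow_nonneg hlog _)] using hh₁ h ((le_max_left _ _).trans hh)

theorem mirrorXi_asymptotics (n k : ℕ) (hn : 1 ≤ n) (hk : k ≤ n) :
    ∃ C : ℝ, 0 < C ∧ ∃ h₀ : ℝ, 1 < h₀ ∧ ∀ h : ℝ, h₀ ≤ h →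
      ‖mirrorXi n k h - (-((n : ℂ) + 1) * (Real.log h : ℂ)) ^ k / (k.factorial : ℂ)‖ ≤
        C * (Real.log h) ^ ((k : ℤ) - 1) :=
  mirrorXi_asymptotics_general n k
end

section
/- Let N ≥ 1, let U ⊆ ℂ^N be a nonempty open convex set, and let A_{abc} : ℂ^N → ℂ (a,b,c ∈ Fin N) be functions, infinitely differentiable over ℂ on U, that are symmetric under all permutations of the indices (a,b,c) and satisfy the closedness condition ∂_d A_{abc} = ∂_a A_{dbc} on U for all a, b, c, d. Let g be a symmetric invertible N×N complex matrix with inverse entries g^{ef}, and assume the associativity condition Σ_{e,f} A_{abe}·g^{ef}·A_{fcd} = Σ_{e,f} A_{ade}·g^{ef}·A_{fbc} holds on U for all a, b, c, d. Then there exists a function Φ : ℂ^N → ℂ, infinitely differentiable over ℂ on U, such that ∂_a∂_b∂_c Φ = A_{abc} on U for all a, b, c; in particular, Φ satisfies the WDVV equations: for all a, b, c, d, Σ_{e,f} (∂_a∂_b∂_e Φ)·g^{ef}·(∂_f∂_c∂_d Φ) = Σ_{e,f} (∂_a∂_d∂_e Φ)·g^{ef}·(∂_f∂_b∂_c Φ)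 on U. -/
open Complex

/-- Partial derivative `∂_aφ(t)` of a scalar function `φ : ℂ^N → ℂ` in the `a`-th
coordinate direction. -/
noncomputable def pdS {N : ℕ} (a : Fin N) (φ : (Fin N → ℂ) → ℂ) (t : Fin N → ℂ) : ℂ :=
  deriv (fun z : ℂ => φ (Function.update t a z)) (t a)

/-- Third partial derivative `∂_a∂_b∂_c φ`. -/
noncomputable def pdS3 {N : ℕ} (a b c : Fin N) (φ : (Fin N → ℂ) → ℂ)
    (t : Fin N → ℂ) : ℂ :=
  pdS a (fun s => pdS b (fun r => pdS c φ r) s) t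

/-! A closed one-form on a convex open set has a primitive, so the symmetries of `A_{abc}` allow
it to be integrated three times: `A_{abc} = ∂_a H_{bc}`, `H_{bc} = ∂_b f_c`, `f_c = ∂_c Φ`. Each
step needs the closedness of the form produced by the previous one; at the second step this is the
symmetry of `A` in `a, b`, and at the third the symmetry of `H`, which has to be built into the
choice of the integration constants.

Since `ContDiffOn 𝕜 ω` means analyticity, each primitive must also be shown to be analytic when
its differential `w` is. Along segments, `f y = f x + (∫₀¹ w (x + s (y - x)) ds) (y - x)`, and
integrating `∑ pₙ (s v)ⁿ` over `s` turns the power series `∑ pₙ vⁿ` of `w` at `x` into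
`∑ (n + 1)⁻¹ pₙ vⁿ`. -/

open Set Topology

section RadialMean

variable {𝕜 E F : Type*} [RCLike 𝕜] [NormedAddCommGroup E] [NormedSpace 𝕜 E]
  [NormedAddCommGroup F] [NormedSpace 𝕜 F]

variable (𝕜) in
/-- The mean of `w` over the segment from `x` to `y`. The parameter of the segment is cast to `𝕜`,
so that no real structure on `E` is needed. -/
noncomputable def radialMean [NormedSpace ℝ F] (w : E → F) (x y : E) : F :=
  ∫ s : ℝ in 0..1, w (x + (s : 𝕜) • (y - x))

/-- The power series of the radial mean of a function with power series `p`. -/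
noncomputable def radialMeanSeries (p : FormalMultilinearSeries 𝕜 E F) :
    FormalMultilinearSeries 𝕜 E F :=
  fun n ↦ ((n : 𝕜) + 1)⁻¹ • p n

lemma radius_le_radius_radialMeanSeries (p : FormalMultilinearSeries 𝕜 E F) :
    p.radius ≤ (radialMeanSeries p).radius := by
  refine FormalMultilinearSeries.radius_le_of_le fun n ↦ ?_
  have inv_le_one : ‖((n : 𝕜) + 1)⁻¹‖ ≤ 1 := by
    rw [norm_inv, ← Nat.cast_succ, RCLike.norm_natCast]
    exact inv_le_one_of_one_le₀ (by simp)
  rw [radialMeanSeries, norm_smul]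
  exact mul_le_of_le_one_left (norm_nonneg _) inv_le_one

lemma add_mem_eball_iff {x y : E} {r : ENNReal} :
    x + y ∈ Metric.eball x r ↔ y ∈ Metric.eball 0 r := by
  simp [edist_eq_enorm_sub]

lemma ofReal_smul_mem_eball {y : E} {r : ENNReal} (hy : y ∈ Metric.eball 0 r) {s : ℝ}
    (hs : s ∈ Icc 0 1) : (s : 𝕜) • y ∈ Metric.eball 0 r := by
  rw [Metric.mem_eball, edist_zero_right] at hy ⊢
  refine lt_of_le_of_lt ?_ hy
  rw [enorm_smul]
  refine mul_le_of_le_one_left zero_le ?_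
  rw [← ofReal_norm, RCLike.norm_ofReal, abs_of_nonneg hs.1]
  exact ENNReal.ofReal_le_one.2 hs.2

lemma apply_ofReal_smul (p : FormalMultilinearSeries 𝕜 E F) (n : ℕ) (s : ℝ) (y : E) :
    (p n fun _ ↦ (s : 𝕜) • y) = (s : 𝕜) ^ n • p n fun _ ↦ y := by
  simpa using (p n).map_smul_univ (fun _ ↦ (s : 𝕜)) fun _ ↦ y

lemma integral_ofReal_pow_zero_one (n : ℕ) :
    ∫ s : ℝ in 0..1, (s : 𝕜) ^ n = ((n : 𝕜) + 1)⁻¹ := by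
  have := RCLike.intervalIntegral_ofReal (𝕜 := 𝕜) (μ := MeasureTheory.volume) (a := 0) (b := 1)
    (f := fun s ↦ s ^ n)
  simpa using this

variable [NormedSpace ℝ F] [CompleteSpace F]

lemma hasFPowerSeriesOnBall_radialMean {w : E → F}
    {p : FormalMultilinearSeries 𝕜 E F} {x : E} {r : ENNReal}
    (hw : HasFPowerSeriesOnBall w p x r) :
    HasFPowerSeriesOnBall (radialMean 𝕜 w x) (radialMeanSeries p) x r where
  r_le := hw.r_le.trans (radius_le_radius_radialMeanSeries p)
  r_pos := hw.r_pos
  hasSum {y} hy := by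
    have termwise_integral (n : ℕ) :
        ∫ s : ℝ in 0..1, (p n fun _ ↦ (s : 𝕜) • y) = radialMeanSeries p n fun _ ↦ y := by
      simp only [apply_ofReal_smul, intervalIntegral.integral_smul_const,
        integral_ofReal_pow_zero_one]
      rfl
    have mem_Icc {s : ℝ} (hs : s ∈ uIoc 0 1) : s ∈ Icc 0 1 :=
      uIcc_of_le (zero_le_one' ℝ) ▸ uIoc_subset_uIcc hs
    have norm_apply_le (n : ℕ) {s : ℝ} (hs : s ∈ Icc 0 1) :
        ‖p n fun _ ↦ (s : 𝕜) • y‖ ≤ ‖p n fun _ ↦ y‖ := by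
      rw [apply_ofReal_smul, norm_smul, norm_pow, RCLike.norm_ofReal, abs_of_nonneg hs.1]
      exact mul_le_of_le_one_left (norm_nonneg _) (pow_le_one₀ hs.1 hs.2)
    have hasSum_apply {s : ℝ} (hs : s ∈ Icc 0 1) :
        HasSum (fun n ↦ p n fun _ ↦ (s : 𝕜) • y) (w (x + (s : 𝕜) • y)) :=
      hw.hasSum (ofReal_smul_mem_eball hy hs)
    have continuous_apply (n : ℕ) : Continuous fun s : ℝ ↦ p n fun _ ↦ (s : 𝕜) • y := by fun_prop
    simp only [radialMean, add_sub_cancel_left, ← termwise_integral]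
    exact intervalIntegral.hasSum_integral_of_dominated_convergence (fun n _ ↦ ‖p n fun _ ↦ y‖)
      (fun n ↦ (continuous_apply n).aestronglyMeasurable)
      (fun n ↦ .of_forall fun _ hs ↦ norm_apply_le n (mem_Icc hs))
      (.of_forall fun _ _ ↦ p.summable_norm_apply (Metric.eball_subset_eball hw.r_le hy))
      intervalIntegrable_const (.of_forall fun _ hs ↦ hasSum_apply (mem_Icc hs))

lemma add_radialMean_apply_sub {f : E → F} {w : E → E →L[𝕜] F} {x y : E}
    (hf : ∀ s ∈ Icc (0 : ℝ) 1, HasFDerivAt f (w (x + (s : 𝕜) • (y - x))) (x + (s : 𝕜) • (y - x)))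
    (hw : ContinuousOn (fun s : ℝ ↦ w (x + (s : 𝕜) • (y - x))) (Icc 0 1)) :
    f x + radialMean 𝕜 w x y (y - x) = f y := by
  have hasDerivAt_line (s : ℝ) (hs : s ∈ Icc 0 1) :
      HasDerivAt (fun z : 𝕜 ↦ f (x + z • (y - x))) (w (x + (s : 𝕜) • (y - x)) (y - x)) (s : 𝕜) := by
    refine (hf s hs).comp_hasDerivAt (s : 𝕜) ?_
    simpa using ((hasDerivAt_id (s : 𝕜)).smul_const (y - x)).const_add x
  have ftc := intervalIntegral.integral_unitInterval_deriv_eq_sub (𝕜 := 𝕜) (z₀ := 0) (z₁ := 1)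
    (f := fun z ↦ f (x + z • (y - x))) (f' := fun z ↦ w (x + z • (y - x)) (y - x))
    (by simpa only [RCLike.real_smul_eq_coe_mul, mul_one, zero_add] using
      hw.clm_apply (continuousOn_const (c := y - x)))
    (by simpa only [RCLike.real_smul_eq_coe_mul, mul_one, zero_add] using hasDerivAt_line)
  rw [radialMean, ContinuousLinearMap.intervalIntegral_apply
    (hw.intervalIntegrable_of_Icc zero_le_one)]
  simpa only [RCLike.real_smul_eq_coe_mul, mul_one, zero_add, one_smul, zero_smul, add_zero,
    add_sub_cancel, eq_sub_iff_add_eq'] using ftc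

lemma hasFPowerSeriesOnBall_of_hasFDerivAt {f : E → F} {w : E → E →L[𝕜] F}
    {p : FormalMultilinearSeries 𝕜 E (E →L[𝕜] F)} {x : E} {r : ENNReal}
    (hf : ∀ y ∈ Metric.eball x r, HasFDerivAt f (w y) y) (hw : HasFPowerSeriesOnBall w p x r) :
    HasFPowerSeriesOnBall f ((radialMeanSeries p).unshift (f x)) x r := by
  refine (hasFPowerSeriesOnBall_radialMean hw).unshift.congr fun y hy ↦ ?_
  have segment_mem (s : ℝ) (hs : s ∈ Icc 0 1) : x + (s : 𝕜) • (y - x) ∈ Metric.eball x r := by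
    rw [add_mem_eball_iff]
    exact ofReal_smul_mem_eball ((add_mem_eball_iff (x := x)).1 (by rwa [add_sub_cancel])) hs
  exact add_radialMean_apply_sub (fun s hs ↦ hf _ (segment_mem s hs))
    (hw.continuousOn.comp (by fun_prop) segment_mem)

lemma analyticAt_of_hasFDerivAt {f : E → F} {w : E → E →L[𝕜] F} {x : E}
    (hf : ∀ᶠ y in 𝓝 x, HasFDerivAt f (w y) y) (hw : AnalyticAt 𝕜 w x) : AnalyticAt 𝕜 f x := by
  obtain ⟨p, r, hp⟩ := hw
  obtain ⟨ε, ε_pos, hε⟩ := EMetric.mem_nhds_iff.1 hf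
  exact ⟨_, _, hasFPowerSeriesOnBall_of_hasFDerivAt
    (fun y hy ↦ hε (Metric.eball_subset_eball (min_le_right r ε) hy))
    (hp.mono (lt_min hp.r_pos ε_pos) (min_le_left r ε))⟩

lemma contDiffOn_succ_of_hasFDerivAt {f : E → F} {w : E → E →L[𝕜] F} {U : Set E} {n : WithTop ℕ∞}
    (hU : IsOpen U) (hf : ∀ x ∈ U, HasFDerivAt f (w x) x) (hw : ContDiffOn 𝕜 n w U) :
    ContDiffOn 𝕜 (n + 1) f U := by
  rw [contDiffOn_succ_iff_hasFDerivWithinAt_of_uniqueDiffOn hU.uniqueDiffOn]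
  refine ⟨?_, w, hw, fun x hx ↦ (hf x hx).hasFDerivWithinAt⟩
  rintro rfl x hx
  exact (analyticAt_of_hasFDerivAt (Filter.eventually_of_mem (hU.mem_nhds hx) hf)
    ((hw x hx).contDiffAt (hU.mem_nhds hx)).analyticAt).analyticWithinAt

end RadialMean

section ClosedForm

variable {𝕜 E F : Type*} [RCLike 𝕜] [NormedAddCommGroup E] [NormedSpace 𝕜 E] [NormedSpace ℝ E]
  [NormedAddCommGroup F] [NormedSpace 𝕜 F] [NormedSpace ℝ F] [CompleteSpace F]

lemma exists_contDiffOn_succ_hasFDerivAt {U : Set E} (hUc : Convex ℝ U) (hU : IsOpen U)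
    {n : WithTop ℕ∞} (hn : n ≠ 0) {w : E → E →L[𝕜] F} (hw : ContDiffOn 𝕜 n w U)
    (hclosed : ∀ x ∈ U, ∀ u v, fderiv 𝕜 w x u v = fderiv 𝕜 w x v u) :
    ∃ f : E → F, ContDiffOn 𝕜 (n + 1) f U ∧ ∀ x ∈ U, HasFDerivAt f (w x) x := by
  have hw_deriv (x : E) (hx : x ∈ U) : HasFDerivAt w (fderiv 𝕜 w x) x :=
    ((hw.differentiableOn hn).differentiableAt (hU.mem_nhds hx)).hasFDerivAt
  obtain ⟨f, hf⟩ := hUc.exists_forall_hasFDerivWithinAt_of_hasFDerivWithinAt_symmetric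
    (fun x hx ↦ ((hw_deriv x hx).restrictScalars ℝ).hasFDerivWithinAt)
    (fun x hx u _ v _ ↦ hclosed x hx u v)
  have hf_deriv (x : E) (hx : x ∈ U) : HasFDerivAt f (w x) x :=
    (hf x hx).hasFDerivAt (hU.mem_nhds hx)
  exact ⟨f, contDiffOn_succ_of_hasFDerivAt hU hf_deriv hw, hf_deriv⟩

end ClosedForm

section PartialDerivative

variable {N : ℕ} {U : Set (Fin N → ℂ)} {n : WithTop ℕ∞}

lemma pdS_eq_of_hasFDerivAt {φ : (Fin N → ℂ) → ℂ} {L : (Fin N → ℂ) →L[ℂ] ℂ} {t : Fin N → ℂ}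
    (h : HasFDerivAt φ L t) (a : Fin N) : pdS a φ t = L (Pi.single a 1) := by
  rw [← Function.update_eq_self a t] at h
  exact (h.comp_hasDerivAt (t a) (hasDerivAt_update t a (t a))).deriv

lemma eqOn_pdS (hU : IsOpen U) {φ ψ : (Fin N → ℂ) → ℂ} (h : EqOn φ ψ U) (a : Fin N) :
    EqOn (pdS a φ) (pdS a ψ) U := by
  intro t ht
  have update_mem : ∀ᶠ z in 𝓝 (t a), Function.update t a z ∈ U :=
    (hasDerivAt_update t a (t a)).continuousAt
      (hU.mem_nhds (by rwa [Function.update_eq_self]))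
  exact Filter.EventuallyEq.deriv_eq (update_mem.mono fun _ hz ↦ h hz)

lemma exists_pdS_eq (hU : IsOpen U) (hUc : Convex ℝ U) (hn : n ≠ 0)
    {B : Fin N → (Fin N → ℂ) → ℂ} (hB : ∀ a, ContDiffOn ℂ n (B a) U)
    (hclosed : ∀ a d, EqOn (pdS d (B a)) (pdS a (B d)) U) :
    ∃ f : (Fin N → ℂ) → ℂ, ContDiffOn ℂ (n + 1) f U ∧ ∀ a, EqOn (pdS a f) (B a) U := by
  let form : (Fin N → ℂ) ≃L[ℂ] ((Fin N → ℂ) →L[ℂ] ℂ) := (ContinuousLinearEquiv.piRing (Fin N)).symm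
  have form_single (b : Fin N → ℂ) (a : Fin N) : form b (Pi.single a 1) = b a :=
    congrFun (form.symm_apply_apply b) a
  let w (t : Fin N → ℂ) : (Fin N → ℂ) →L[ℂ] ℂ := form fun a ↦ B a t
  have hw : ContDiffOn ℂ n w U := form.contDiff.comp_contDiffOn (contDiffOn_pi.2 hB)
  have fderiv_w_single (t : Fin N → ℂ) (ht : t ∈ U) (a d : Fin N) :
      fderiv ℂ w t (Pi.single d 1) (Pi.single a 1) = pdS d (B a) t := by
    have hw_deriv := ((hw.differentiableOn hn).differentiableAt (hU.mem_nhds ht)).hasFDerivAt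
    have := hw_deriv.clm_apply (hasFDerivAt_const (Pi.single a 1) t)
    simp only [w, form_single] at this
    simpa using (pdS_eq_of_hasFDerivAt this d).symm
  have fderiv_w_symm (t : Fin N → ℂ) (ht : t ∈ U) : fderiv ℂ w t = (fderiv ℂ w t).flip := by
    refine ContinuousLinearMap.coe_injective ((Pi.basisFun ℂ (Fin N)).ext fun d ↦ ?_)
    refine ContinuousLinearMap.coe_injective ((Pi.basisFun ℂ (Fin N)).ext fun a ↦ ?_)
    simpa [fderiv_w_single t ht] using hclosed a d ht
  obtain ⟨f, hf, hf_deriv⟩ := exists_contDiffOn_succ_hasFDerivAt hUc hU hn hw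
    fun t ht u v ↦ DFunLike.congr_fun (DFunLike.congr_fun (fderiv_w_symm t ht) u) v
  exact ⟨f, hf, fun a t ht ↦ (pdS_eq_of_hasFDerivAt (hf_deriv t ht) a).trans (form_single _ a)⟩

lemma exists_pdS_pdS_eq (hU : IsOpen U) (hUc : Convex ℝ U) (hn : n ≠ 0)
    {H : Fin N → Fin N → (Fin N → ℂ) → ℂ} (hH : ∀ b c, ContDiffOn ℂ n (H b c) U)
    (hsymm : ∀ b c, EqOn (H b c) (H c b) U)
    (hclosed : ∀ b c d, EqOn (pdS d (H b c)) (pdS b (H d c)) U) :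
    ∃ Φ : (Fin N → ℂ) → ℂ, ContDiffOn ℂ (n + 2) Φ U ∧
      ∀ b c, EqOn (pdS b (pdS c Φ)) (H b c) U := by
  choose f hf hfH using fun c ↦
    exists_pdS_eq hU hUc hn (fun b ↦ hH b c) (fun b d ↦ hclosed b c d)
  obtain ⟨Φ, hΦ, hΦf⟩ := exists_pdS_eq hU hUc (by simp) hf
    fun c d ↦ (hfH c d).trans ((hsymm d c).trans (hfH d c).symm)
  refine ⟨Φ, by rwa [add_assoc, one_add_one_eq_two] at hΦ, fun b c ↦ ?_⟩
  exact (eqOn_pdS hU (hΦf c) b).trans (hfH c b)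

lemma exists_pdS3_eq (hU : IsOpen U) (hUc : Convex ℝ U) (hn : n ≠ 0)
    {A : Fin N → Fin N → Fin N → (Fin N → ℂ) → ℂ} (hA : ∀ a b c, ContDiffOn ℂ n (A a b c) U)
    (hsymm : ∀ a b c, EqOn (A a b c) (A b a c) U)
    (hsymm' : ∀ a b c, EqOn (A a b c) (A a c b) U)
    (hclosed : ∀ a b c d, EqOn (pdS d (A a b c)) (pdS a (A d b c)) U) :
    ∃ Φ : (Fin N → ℂ) → ℂ, ContDiffOn ℂ (n + 3) Φ U ∧
      ∀ a b c, EqOn (pdS3 a b c Φ) (A a b c) U := by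
  choose K hK hKA using fun b c ↦
    exists_pdS_eq hU hUc hn (fun a ↦ hA a b c) (fun a d ↦ hclosed a b c d)
  -- `K b c` and `K c b` may differ by an integration constant.
  let H (b c : Fin N) : (Fin N → ℂ) → ℂ := K (min b c) (max b c)
  have H_comm (b c : Fin N) : H b c = H c b := by simp only [H, min_comm, max_comm]
  have pdS_H (a b c : Fin N) : EqOn (pdS a (H b c)) (A a b c) U := by
    rcases le_total b c with h | h
    · simpa only [H, min_eq_left h, max_eq_right h] using hKA b c a
    · simpa only [H, min_eq_right h, max_eq_left h] using (hKA c b a).trans (hsymm' a c b)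
  obtain ⟨Φ, hΦ, hΦH⟩ := exists_pdS_pdS_eq hU hUc (by simp) (fun b c ↦ hK (min b c) (max b c))
    (fun b c t _ ↦ congrFun (H_comm b c) t)
    (fun b c d ↦ (pdS_H d b c).trans ((hsymm d b c).trans (pdS_H b d c).symm))
  refine ⟨Φ, by rwa [add_assoc, show (1 + 2 : WithTop ℕ∞) = 3 by norm_num] at hΦ, fun a b c ↦ ?_⟩
  exact (eqOn_pdS hU (hΦH b c) a).trans (pdS_H a b c)

theorem wdvv_potential_exists_general (hU : IsOpen U) (hUc : Convex ℝ U) (hn : n ≠ 0)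
    {A : Fin N → Fin N → Fin N → (Fin N → ℂ) → ℂ} (hA : ∀ a b c, ContDiffOn ℂ n (A a b c) U)
    (hsymm : ∀ a b c, EqOn (A a b c) (A b a c) U)
    (hsymm' : ∀ a b c, EqOn (A a b c) (A a c b) U)
    (hclosed : ∀ a b c d, EqOn (pdS d (A a b c)) (pdS a (A d b c)) U)
    {η : Matrix (Fin N) (Fin N) ℂ}
    (hassoc : ∀ a b c d, ∀ t ∈ U,
      ∑ e, ∑ f, A a b e t * η e f * A f c d t = ∑ e, ∑ f, A a d e t * η e f * A f b c t) :
    ∃ Φ : (Fin N → ℂ) → ℂ, ContDiffOn ℂ (n + 3) Φ U ∧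
      (∀ a b c, ∀ t ∈ U, pdS3 a b c Φ t = A a b c t) ∧
      (∀ a b c d, ∀ t ∈ U,
        ∑ e, ∑ f, pdS3 a b e Φ t * η e f * pdS3 f c d Φ t =
          ∑ e, ∑ f, pdS3 a d e Φ t * η e f * pdS3 f b c Φ t) := by
  obtain ⟨Φ, hΦ, hΦA⟩ := exists_pdS3_eq hU hUc hn hA hsymm hsymm' hclosed
  refine ⟨Φ, hΦ, hΦA, fun a b c d t ht ↦ ?_⟩
  simpa only [hΦA _ _ _ ht] using hassoc a b c d t ht

end PartialDerivative

/-- Existence of a WDVV potential: totally symmetric, closed structure constants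
`A_{abc}` satisfying the associativity condition with respect to a constant symmetric
invertible metric `g` admit a potential `Φ` with `∂_a∂_b∂_cΦ = A_{abc}`, which then
satisfies the WDVV equations. -/
theorem wdvv_potential_exists
    (N : ℕ) (hN : 1 ≤ N)
    (U : Set (Fin N → ℂ)) (hU : IsOpen U) (hUc : Convex ℝ U) (hUne : U.Nonempty)
    (A : Fin N → Fin N → Fin N → (Fin N → ℂ) → ℂ)
    (hA : ∀ a b c, ContDiffOn ℂ ⊤ (A a b c) U)
    (hsymm : ∀ a b c, A a b c = A b a c)
    (hsymm' : ∀ a b c, A a b c = A a c b)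
    (hclosed : ∀ a b c d, ∀ t ∈ U, pdS d (A a b c) t = pdS a (A d b c) t)
    (g ginv : Matrix (Fin N) (Fin N) ℂ)
    (hg : g.transpose = g) (hginv : g * ginv = 1) (hinvg : ginv * g = 1)
    (hassoc : ∀ a b c d, ∀ t ∈ U,
      ∑ e, ∑ f, A a b e t * ginv e f * A f c d t =
        ∑ e, ∑ f, A a d e t * ginv e f * A f b c t) :
    ∃ Φ : (Fin N → ℂ) → ℂ, ContDiffOn ℂ ⊤ Φ U ∧
      (∀ a b c, ∀ t ∈ U, pdS3 a b c Φ t = A a b c t) ∧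
      (∀ a b c d, ∀ t ∈ U,
        ∑ e, ∑ f, pdS3 a b e Φ t * ginv e f * pdS3 f c d Φ t =
          ∑ e, ∑ f, pdS3 a d e Φ t * ginv e f * pdS3 f b c Φ t) := by
  exact wdvv_potential_exists_general hU hUc (by simp) hA (fun a b c t _ ↦ congrFun (hsymm a b c) t)
    (fun a b c t _ ↦ congrFun (hsymm' a b c) t) hclosed hassoc
end
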